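/- For the IMH chain on the finite state space X = {1, …, m}, assume additionally that w₁ > 1 (equivalently π ≠ p). Then for every state i, the convergence rate at i exists and equals 1 − 1/w₁, i.e. lim_{t→∞} ‖P^t(i,·) − π‖_TV^{1/t} = 1 − 1/w₁. -/

import Mathlib

/-- The IMH transition matrix on a finite state space, for target pmf `tgt` and proposal
pmf `prp`: `P(i,j) = p_j·min(1, w_j/w_i)` for `j ≠ i` and
`P(i,i) = p_i + Σ_k p_k·max(0, 1 − w_k/w_i)`, where `w_i = π_i/p_i`. -/
noncomputable def imhMatrix {n : ℕ} (tgt prp : Fin n → ℝ) : Matrix (Fin n) (Fin n) ℝ :=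
  Matrix.of fun i j =>
    if j = i then prp i + ∑ k, prp k * max 0 (1 - (tgt k / prp k) / (tgt i / prp i))
    else prp j * min 1 ((tgt j / prp j) / (tgt i / prp i))

/-- Total variation distance between two pmfs on a finite state space. -/
noncomputable def tvFin {n : ℕ} (μ ν : Fin n → ℝ) : ℝ := (1 / 2) * ∑ j, |μ j - ν j|

/-!
Let `k` be a state of maximal weight `w*`. A proposal to move to `k` is always accepted, so column
`k` of the transition matrix `P` equals `p_k + (1 - 1/w*) δ_k`. Hence the `k`-th coordinate of a
signed vector of total mass zero is multiplied by exactly `1 - 1/w*` under `P`. On the other hand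
`P(i,j) ≥ π_j / w*` for all `i, j`, and by Doeblin's argument this minorization of total mass `1/w*`
contracts the `ℓ¹` norm of such vectors by `1 - 1/w*`. Applied to `δ_i - π`, the two facts squeeze
`‖P^t(i,·) - π‖_TV` between two positive multiples of `(1 - 1/w*)^t`.
-/

open Matrix Filter Topology

section StochasticMatrices

variable {ι κ R : Type*}

theorem sum_row_of_mulVec_one [Fintype κ] [NonAssocSemiring R] {P : Matrix ι κ R}
    (hP : P *ᵥ 1 = 1) (i : ι) : ∑ j, P i j = 1 := by
  simpa only [mulVec, dotProduct_one, Pi.one_apply] using congrFun hP i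

theorem sum_le_one_of_minorization [Fintype κ] [Nonempty ι] [NonAssocSemiring R] [PartialOrder R]
    [IsOrderedAddMonoid R] {P : Matrix ι κ R} (hP : P *ᵥ 1 = 1) {ν : κ → R}
    (hν : ∀ i j, ν j ≤ P i j) : ∑ j, ν j ≤ 1 := by
  obtain ⟨i⟩ := ‹Nonempty ι›
  exact (Finset.sum_le_sum fun j _ => hν i j).trans_eq (sum_row_of_mulVec_one hP i)

theorem apply_lt_one_of_pos_of_sum_eq_one [Fintype ι] [Nontrivial ι] [AddCommMonoid R] [One R]
    [PartialOrder R] [IsOrderedCancelAddMonoid R] {q : ι → R} (hq : ∀ i, 0 < q i)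
    (hsum : ∑ i, q i = 1) (k : ι) : q k < 1 := by
  obtain ⟨j, hjk⟩ := exists_ne k
  exact hsum ▸ Finset.single_lt_sum hjk (Finset.mem_univ k) (Finset.mem_univ j) (hq j)
    fun l _ _ => (hq l).le

variable [Fintype ι]

theorem sum_vecMul_of_mulVec_one [Fintype κ] [Semiring R] {P : Matrix ι κ R} (hP : P *ᵥ 1 = 1)
    (v : ι → R) : ∑ j, (v ᵥ* P) j = ∑ i, v i := by
  rw [← dotProduct_one, ← dotProduct_mulVec, hP, dotProduct_one]

theorem pow_mulVec_eq_self [DecidableEq ι] [Semiring R] {P : Matrix ι ι R} {x : ι → R}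
    (hx : P *ᵥ x = x) (t : ℕ) : P ^ t *ᵥ x = x := by
  induction t with
  | zero => rw [pow_zero, one_mulVec]
  | succ t ih => rw [pow_succ, ← mulVec_mulVec, hx, ih]

theorem vecMul_pow_eq_self [DecidableEq ι] [Semiring R] {P : Matrix ι ι R} {x : ι → R}
    (hx : x ᵥ* P = x) (t : ℕ) : x ᵥ* P ^ t = x := by
  induction t with
  | zero => rw [pow_zero, vecMul_one]
  | succ t ih => rw [pow_succ, ← vecMul_vecMul, ih, hx]

theorem vecMul_apply_of_col_eq_const_add_single [DecidableEq ι] [Semiring R] {P : Matrix ι ι R}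
    {k : ι} {a r : R} (hcol : ∀ i, P i k = a + if i = k then r else 0) {v : ι → R}
    (hv : ∑ i, v i = 0) : (v ᵥ* P) k = v k * r := by
  simp only [vecMul, dotProduct, hcol, mul_add, Finset.sum_add_distrib, ← Finset.sum_mul, hv,
    zero_mul, zero_add, mul_ite, mul_zero, Finset.sum_ite_eq', Finset.mem_univ, if_true]

theorem vecMul_pow_apply_of_col_eq_const_add_single [DecidableEq ι] [Semiring R]
    {P : Matrix ι ι R} (hP : P *ᵥ 1 = 1) {k : ι} {a r : R}
    (hcol : ∀ i, P i k = a + if i = k then r else 0) {v : ι → R} (hv : ∑ i, v i = 0) (t : ℕ) :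
    (v ᵥ* P ^ t) k = v k * r ^ t := by
  induction t with
  | zero => rw [pow_zero, pow_zero, vecMul_one, mul_one]
  | succ t ih =>
    have hvt : ∑ i, (v ᵥ* P ^ t) i = 0 := by
      rw [sum_vecMul_of_mulVec_one (pow_mulVec_eq_self hP t), hv]
    rw [pow_succ P, ← vecMul_vecMul, vecMul_apply_of_col_eq_const_add_single hcol hvt, ih,
      pow_succ, mul_assoc]

variable [CommRing R] [LinearOrder R] [IsStrictOrderedRing R]

theorem sum_abs_vecMul_le_of_minorization [Fintype κ] {P : Matrix ι κ R} (hP : P *ᵥ 1 = 1)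
    {ν : κ → R} (hν : ∀ i j, ν j ≤ P i j) {v : ι → R} (hv : ∑ i, v i = 0) :
    ∑ j, |(v ᵥ* P) j| ≤ (1 - ∑ j, ν j) * ∑ i, |v i| := by
  -- As `v` has mass zero, subtracting the common part `ν` from every row of `P` changes nothing.
  have hsub (j : κ) : (v ᵥ* P) j = ∑ i, v i * (P i j - ν j) := by
    simp only [mul_sub, Finset.sum_sub_distrib, ← Finset.sum_mul, hv, zero_mul, sub_zero]
    rfl
  calc ∑ j, |(v ᵥ* P) j| ≤ ∑ j, ∑ i, |v i| * (P i j - ν j) := by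
        refine Finset.sum_le_sum fun j _ => ?_
        rw [hsub]
        refine (Finset.abs_sum_le_sum_abs _ _).trans_eq (Finset.sum_congr rfl fun i _ => ?_)
        rw [abs_mul, abs_of_nonneg (sub_nonneg.2 (hν i j))]
    _ = ∑ i, |v i| * ∑ j, (P i j - ν j) := by
        rw [Finset.sum_comm]
        simp only [Finset.mul_sum]
    _ = (1 - ∑ j, ν j) * ∑ i, |v i| := by
        simp only [Finset.sum_sub_distrib, sum_row_of_mulVec_one hP, ← Finset.sum_mul, mul_comm]

theorem sum_abs_vecMul_pow_le_of_minorization [DecidableEq ι] [Nonempty ι] {P : Matrix ι ι R}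
    (hP : P *ᵥ 1 = 1) {ν : ι → R} (hν : ∀ i j, ν j ≤ P i j) {v : ι → R} (hv : ∑ i, v i = 0)
    (t : ℕ) : ∑ j, |(v ᵥ* P ^ t) j| ≤ (1 - ∑ j, ν j) ^ t * ∑ i, |v i| := by
  induction t with
  | zero => rw [pow_zero, pow_zero, vecMul_one, one_mul]
  | succ t ih =>
    have hvt : ∑ i, (v ᵥ* P ^ t) i = 0 := by
      rw [sum_vecMul_of_mulVec_one (pow_mulVec_eq_self hP t), hv]
    calc ∑ j, |(v ᵥ* P ^ (t + 1)) j| = ∑ j, |((v ᵥ* P ^ t) ᵥ* P) j| := by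
          rw [pow_succ, vecMul_vecMul]
      _ ≤ (1 - ∑ j, ν j) * ∑ i, |(v ᵥ* P ^ t) i| := sum_abs_vecMul_le_of_minorization hP hν hvt
      _ ≤ (1 - ∑ j, ν j) * ((1 - ∑ j, ν j) ^ t * ∑ i, |v i|) :=
          mul_le_mul_of_nonneg_left ih (sub_nonneg.2 (sum_le_one_of_minorization hP hν))
      _ = (1 - ∑ j, ν j) ^ (t + 1) * ∑ i, |v i| := by rw [pow_succ', mul_assoc]

end StochasticMatrices

section GeometricRate

theorem tendsto_const_mul_pow_rpow_inv {c r : ℝ} (hc : 0 < c) (hr : 0 ≤ r) :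
    Tendsto (fun t : ℕ => (c * r ^ t) ^ (t : ℝ)⁻¹) atTop (𝓝 r) := by
  have hroot : Tendsto (fun t : ℕ => c ^ (t : ℝ)⁻¹) atTop (𝓝 1) := by
    simpa only [Real.rpow_zero, Function.comp_def] using
      ((Real.continuous_const_rpow hc.ne').tendsto 0).comp tendsto_inv_atTop_nhds_zero_nat
  have hlim : Tendsto (fun t : ℕ => c ^ (t : ℝ)⁻¹ * r) atTop (𝓝 r) := by
    simpa only [one_mul] using hroot.mul_const r
  refine hlim.congr' ?_
  filter_upwards [eventually_ne_atTop 0] with t ht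
  rw [Real.mul_rpow hc.le (pow_nonneg hr t), Real.pow_rpow_inv_natCast hr ht]

theorem tendsto_rpow_inv_of_geometric_bounds {u : ℕ → ℝ} {c C r : ℝ} (hc : 0 < c) (hr : 0 ≤ r)
    (hlower : ∀ t, c * r ^ t ≤ u t) (hupper : ∀ t, u t ≤ C * r ^ t) :
    Tendsto (fun t : ℕ => u t ^ (t : ℝ)⁻¹) atTop (𝓝 r) := by
  have hC : 0 < C := by
    have h0 := (hlower 0).trans (hupper 0)
    rw [pow_zero, mul_one, mul_one] at h0
    exact hc.trans_le h0
  have hnonneg (t : ℕ) : 0 ≤ c * r ^ t := by positivity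
  refine tendsto_of_tendsto_of_tendsto_of_le_of_le (tendsto_const_mul_pow_rpow_inv hc hr)
    (tendsto_const_mul_pow_rpow_inv hC hr) (fun t => ?_) (fun t => ?_)
  · exact Real.rpow_le_rpow (hnonneg t) (hlower t) (by positivity)
  · exact Real.rpow_le_rpow ((hnonneg t).trans (hlower t)) (hupper t) (by positivity)

end GeometricRate

section TotalVariation

variable {n : ℕ}

theorem half_abs_sub_le_tvFin (μ q : Fin n → ℝ) (k : Fin n) : 1 / 2 * |μ k - q k| ≤ tvFin μ q :=
  mul_le_mul_of_nonneg_left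
    (Finset.single_le_sum (f := fun j => |μ j - q j|) (fun _ _ => abs_nonneg _)
      (Finset.mem_univ k))
    one_half_pos.le

theorem tendsto_tvFin_vecMul_pow_rpow_inv {P : Matrix (Fin n) (Fin n) ℝ} (hP : P *ᵥ 1 = 1)
    {μ q ν : Fin n → ℝ} (hq : q ᵥ* P = q) (hμq : ∑ i, μ i = ∑ i, q i) {k : Fin n} {a r : ℝ}
    (hcol : ∀ i, P i k = a + if i = k then r else 0) (hν : ∀ i j, ν j ≤ P i j)
    (hr : 1 - ∑ j, ν j = r) (hk : μ k ≠ q k) :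
    Tendsto (fun t : ℕ => tvFin (μ ᵥ* P ^ t) q ^ (t : ℝ)⁻¹) atTop (𝓝 r) := by
  have : Nonempty (Fin n) := ⟨k⟩
  have hr_nonneg : 0 ≤ r := hr ▸ sub_nonneg.2 (sum_le_one_of_minorization hP hν)
  have hmass : ∑ i, (μ - q) i = 0 := by
    simp only [Pi.sub_apply, Finset.sum_sub_distrib, hμq, sub_self]
  have hdiff (t : ℕ) (j : Fin n) : (μ ᵥ* P ^ t) j - q j = ((μ - q) ᵥ* P ^ t) j := by
    rw [Matrix.sub_vecMul, vecMul_pow_eq_self hq, Pi.sub_apply]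
  have hc : 0 < 1 / 2 * |μ k - q k| := mul_pos one_half_pos (abs_pos.2 (sub_ne_zero.2 hk))
  refine tendsto_rpow_inv_of_geometric_bounds (C := tvFin μ q) hc hr_nonneg
    (fun t => ?_) (fun t => ?_)
  · calc 1 / 2 * |μ k - q k| * r ^ t = 1 / 2 * |(μ ᵥ* P ^ t) k - q k| := by
          rw [hdiff, vecMul_pow_apply_of_col_eq_const_add_single hP hcol hmass, abs_mul,
            abs_of_nonneg (pow_nonneg hr_nonneg t), mul_assoc, Pi.sub_apply]
      _ ≤ tvFin (μ ᵥ* P ^ t) q := half_abs_sub_le_tvFin _ _ k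
  · calc tvFin (μ ᵥ* P ^ t) q = 1 / 2 * ∑ j, |((μ - q) ᵥ* P ^ t) j| := by
          simp only [tvFin, hdiff]
      _ ≤ 1 / 2 * (r ^ t * ∑ j, |(μ - q) j|) := by
          rw [← hr]
          exact mul_le_mul_of_nonneg_left (sum_abs_vecMul_pow_le_of_minorization hP hν hmass t)
            one_half_pos.le
      _ = tvFin μ q * r ^ t := by
          simp only [tvFin, Pi.sub_apply]
          ring

end TotalVariation

section IndependentMetropolisHastings

/-- The probability `p_j · min(1, w_j / w_i)` that the IMH chain at `i` proposes `j` and accepts,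
written as `min(p_j, π_j / w_i)` with `1 / w_i = p_i / π_i`, which avoids nested quotients. -/
noncomputable def imhAccept {ι : Type*} (tgt prp : ι → ℝ) (i j : ι) : ℝ :=
  min (prp j) (tgt j * (prp i / tgt i))

section AcceptedProposals

variable {ι : Type*} {tgt prp : ι → ℝ}

theorem mul_min_one_eq_imhAccept {j : ι} (hj : 0 < prp j) (i : ι) :
    prp j * min 1 ((tgt j / prp j) / (tgt i / prp i)) = imhAccept tgt prp i j := by
  rw [mul_min_of_nonneg _ _ hj.le, mul_one, ← mul_div_assoc, mul_div_cancel₀ _ hj.ne',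
    div_eq_mul_inv, inv_div, imhAccept]

theorem imhAccept_self {i : ι} (hi : tgt i ≠ 0) : imhAccept tgt prp i i = prp i := by
  rw [imhAccept, mul_div_cancel₀ _ hi, min_self]

theorem mul_imhAccept {i : ι} (hi : 0 < tgt i) (j : ι) :
    tgt i * imhAccept tgt prp i j = min (tgt i * prp j) (tgt j * prp i) := by
  rw [imhAccept, mul_min_of_nonneg _ _ hi.le, mul_left_comm (tgt i), mul_div_cancel₀ _ hi.ne']

theorem mul_imhAccept_comm {i j : ι} (hi : 0 < tgt i) (hj : 0 < tgt j) :
    tgt i * imhAccept tgt prp i j = tgt j * imhAccept tgt prp j i := by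
  rw [mul_imhAccept hi, mul_imhAccept hj, min_comm]

theorem mul_div_le_imhAccept {j k : ι} (hj : 0 < tgt j)
    (hk : ∀ i, prp k / tgt k ≤ prp i / tgt i) (i : ι) :
    tgt j * (prp k / tgt k) ≤ imhAccept tgt prp i j := by
  have hle (l : ι) : tgt j * (prp k / tgt k) ≤ tgt j * (prp l / tgt l) :=
    mul_le_mul_of_nonneg_left (hk l) hj.le
  refine le_min ?_ (hle i)
  simpa only [mul_div_cancel₀ _ hj.ne'] using hle j

theorem imhAccept_eq_mul_div {j k : ι} (hj : 0 < tgt j)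
    (hk : ∀ i, prp k / tgt k ≤ prp i / tgt i) :
    imhAccept tgt prp k j = tgt j * (prp k / tgt k) :=
  (min_le_right _ _).antisymm (mul_div_le_imhAccept hj hk k)

theorem imhAccept_eq_prp {k : ι} (htgt_k : 0 < tgt k)
    (hk : ∀ i, prp k / tgt k ≤ prp i / tgt i) (i : ι) : imhAccept tgt prp i k = prp k := by
  have hge : prp k ≤ imhAccept tgt prp i k := by
    simpa only [mul_div_cancel₀ _ htgt_k.ne'] using mul_div_le_imhAccept htgt_k hk i
  exact (min_le_left _ _).antisymm hge

end AcceptedProposals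

variable {n : ℕ} {tgt prp : Fin n → ℝ}

theorem imhMatrix_apply (htgt : ∀ i, 0 < tgt i) (hprp : ∀ i, 0 < prp i) (hsum : ∑ i, prp i = 1)
    (i j : Fin n) :
    imhMatrix tgt prp i j =
      imhAccept tgt prp i j + if j = i then 1 - ∑ l, imhAccept tgt prp i l else 0 := by
  have hreject (l : Fin n) :
      prp l * max 0 (1 - (tgt l / prp l) / (tgt i / prp i)) = prp l - imhAccept tgt prp i l := by
    rw [← sub_self (1 : ℝ), max_sub_sub_left, mul_sub, mul_one, mul_min_one_eq_imhAccept (hprp l)]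
  rw [imhMatrix, of_apply]
  split_ifs with hji
  · rw [hji, imhAccept_self (htgt i).ne']
    simp only [hreject, Finset.sum_sub_distrib, hsum]
  · rw [mul_min_one_eq_imhAccept (hprp j), add_zero]

theorem imhAccept_le_imhMatrix (htgt : ∀ i, 0 < tgt i) (hprp : ∀ i, 0 < prp i)
    (hsum : ∑ i, prp i = 1) (i j : Fin n) : imhAccept tgt prp i j ≤ imhMatrix tgt prp i j := by
  have hle : ∑ l, imhAccept tgt prp i l ≤ 1 :=
    hsum ▸ Finset.sum_le_sum fun l _ => min_le_left _ _
  rw [imhMatrix_apply htgt hprp hsum]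
  refine le_add_of_nonneg_right ?_
  split_ifs
  exacts [sub_nonneg.2 hle, le_rfl]

theorem imhMatrix_mulVec_one (htgt : ∀ i, 0 < tgt i) (hprp : ∀ i, 0 < prp i)
    (hsum : ∑ i, prp i = 1) : imhMatrix tgt prp *ᵥ 1 = 1 := by
  ext i
  simp only [mulVec, dotProduct_one, Pi.one_apply, imhMatrix_apply htgt hprp hsum,
    Finset.sum_add_distrib, Finset.sum_ite_eq', Finset.mem_univ, if_true, add_sub_cancel]

theorem imhMatrix_detailed_balance (htgt : ∀ i, 0 < tgt i) (hprp : ∀ i, 0 < prp i)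
    (hsum : ∑ i, prp i = 1) (i j : Fin n) :
    tgt i * imhMatrix tgt prp i j = tgt j * imhMatrix tgt prp j i := by
  rcases eq_or_ne j i with rfl | hji
  · rfl
  · rw [imhMatrix_apply htgt hprp hsum, imhMatrix_apply htgt hprp hsum, if_neg hji,
      if_neg hji.symm, add_zero, add_zero, mul_imhAccept_comm (htgt i) (htgt j)]

theorem vecMul_imhMatrix (htgt : ∀ i, 0 < tgt i) (hprp : ∀ i, 0 < prp i)
    (hsum : ∑ i, prp i = 1) : tgt ᵥ* imhMatrix tgt prp = tgt := by
  ext j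
  calc (tgt ᵥ* imhMatrix tgt prp) j = ∑ i, tgt i * imhMatrix tgt prp i j := rfl
    _ = ∑ i, tgt j * imhMatrix tgt prp j i :=
        Finset.sum_congr rfl fun i _ => imhMatrix_detailed_balance htgt hprp hsum i j
    _ = tgt j := by
        rw [← Finset.mul_sum, sum_row_of_mulVec_one (imhMatrix_mulVec_one htgt hprp hsum), mul_one]

theorem imhMatrix_apply_of_max_weight (htgt : ∀ i, 0 < tgt i) (hprp : ∀ i, 0 < prp i)
    (htgt_sum : ∑ i, tgt i = 1) (hprp_sum : ∑ i, prp i = 1) {k : Fin n}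
    (hk : ∀ i, prp k / tgt k ≤ prp i / tgt i) (i : Fin n) :
    imhMatrix tgt prp i k = prp k + if i = k then 1 - prp k / tgt k else 0 := by
  rw [imhMatrix_apply htgt hprp hprp_sum, imhAccept_eq_prp (htgt k) hk]
  rcases eq_or_ne i k with rfl | hik
  · simp only [imhAccept_eq_mul_div (htgt _) hk, ← Finset.sum_mul, htgt_sum, one_mul]
  · rw [if_neg hik, if_neg hik.symm]

theorem imh_finite_every_point_rate_general [Nontrivial (Fin n)] (htgt : ∀ i, 0 < tgt i)
    (hprp : ∀ i, 0 < prp i) (htgt_sum : ∑ i, tgt i = 1) (hprp_sum : ∑ i, prp i = 1) {k : Fin n}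
    (hk : ∀ i, tgt i / prp i ≤ tgt k / prp k) (i : Fin n) :
    Tendsto (fun t : ℕ => tvFin ((imhMatrix tgt prp ^ t) i) tgt ^ (t : ℝ)⁻¹) atTop
      (𝓝 (1 - 1 / (tgt k / prp k))) := by
  have hk' (j : Fin n) : prp k / tgt k ≤ prp j / tgt j := by
    simpa only [inv_div] using inv_anti₀ (div_pos (htgt j) (hprp j)) (hk j)
  have hstart : (Pi.single i 1 : Fin n → ℝ) k ≠ tgt k := by
    rw [Pi.single_apply]
    split_ifs
    exacts [(apply_lt_one_of_pos_of_sum_eq_one htgt htgt_sum k).ne', (htgt k).ne]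
  have hmass : ∑ j, (Pi.single i 1 : Fin n → ℝ) j = ∑ j, tgt j := by
    rw [htgt_sum, Finset.sum_pi_single', if_pos (Finset.mem_univ i)]
  have hrate : 1 - ∑ j, tgt j * (prp k / tgt k) = 1 - prp k / tgt k := by
    rw [← Finset.sum_mul, htgt_sum, one_mul]
  simpa only [one_div_div, single_one_vecMul, row_def] using
    tendsto_tvFin_vecMul_pow_rpow_inv (imhMatrix_mulVec_one htgt hprp hprp_sum)
      (vecMul_imhMatrix htgt hprp hprp_sum) hmass
      (imhMatrix_apply_of_max_weight htgt hprp htgt_sum hprp_sum hk')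
      (fun l j => (mul_div_le_imhAccept (htgt j) hk' l).trans
        (imhAccept_le_imhMatrix htgt hprp hprp_sum l j)) hrate hstart

end IndependentMetropolisHastings

/-- for the IMH chain on `{1, …, m}` (here `Fin (m+2)`, state `1` being
index `0`) with `w₁ > 1`, every state `i` has convergence rate exactly `1 − 1/w₁`:
`‖Pᵗ(i,·) − π‖_TV^{1/t} → 1 − 1/w₁` as `t → ∞`. -/
theorem imh_finite_every_point_rate (m : ℕ) (tgt prp : Fin (m + 2) → ℝ)
    (htgt_pos : ∀ i, 0 < tgt i) (hprp_pos : ∀ i, 0 < prp i)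
    (htgt_sum : ∑ i, tgt i = 1) (hprp_sum : ∑ i, prp i = 1)
    (hmono : ∀ i j : Fin (m + 2), i ≤ j → tgt j / prp j ≤ tgt i / prp i)
    (hw : 1 < tgt 0 / prp 0) :
    ∀ i : Fin (m + 2),
      Filter.Tendsto (fun t : ℕ => (tvFin ((imhMatrix tgt prp ^ t) i) tgt) ^ ((t : ℝ)⁻¹))
        Filter.atTop (nhds (1 - 1 / (tgt 0 / prp 0))) := by
  exact imh_finite_every_point_rate_general htgt_pos hprp_pos htgt_sum hprp_sum
    fun i => hmono 0 i (Fin.zero_le i)
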